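/- For τ in the upper half-plane and z ∈ ℂ with ϑ₁₀(2τ,z), ϑ₀₀(2τ,z), ϑ₁₀(τ,z) all nonzero, one has ϑ₀₀(2τ,z)/ϑ₁₀(2τ,z) + ϑ₁₀(2τ,z)/ϑ₀₀(2τ,z) = (η(τ)⁶ / (η(τ/2)² η(2τ)⁴)) · ϑ₀₀(τ,z)/ϑ₁₀(τ,z). -/

import Mathlib

open Real Complex Filter Topology

noncomputable section

noncomputable def theta00 (τ z : ℂ) : ℂ :=
  ∑' n : ℤ, Complex.exp (2*(π:ℂ)*Complex.I*(n:ℂ)*z) *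
    Complex.exp (2*(π:ℂ)*Complex.I*τ*((n:ℂ)^2/2))

noncomputable def theta01 (τ z : ℂ) : ℂ :=
  ∑' n : ℤ, (-1:ℂ)^n * Complex.exp (2*(π:ℂ)*Complex.I*(n:ℂ)*z) *
    Complex.exp (2*(π:ℂ)*Complex.I*τ*((n:ℂ)^2/2))

noncomputable def theta10 (τ z : ℂ) : ℂ :=
  ∑' n : ℤ, Complex.exp (2*(π:ℂ)*Complex.I*((n:ℂ)+1/2)*z) *
    Complex.exp (2*(π:ℂ)*Complex.I*τ*((1/2)*((n:ℂ)+1/2)^2))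

noncomputable def theta11 (τ z : ℂ) : ℂ :=
  Complex.I * ∑' n : ℤ, (-1:ℂ)^n * Complex.exp (2*(π:ℂ)*Complex.I*((n:ℂ)+1/2)*z) *
    Complex.exp (2*(π:ℂ)*Complex.I*τ*((1/2)*((n:ℂ)+1/2)^2))

noncomputable def dedekindEta (τ : ℂ) : ℂ :=
  Complex.exp ((π:ℂ)*Complex.I*τ/12) *
    ∏' n : ℕ, (1 - Complex.exp (2*(π:ℂ)*Complex.I*τ*((n:ℂ)+1)))

/-!
Splitting the product of two theta series, a sum over pairs `(k, l)` of integers, by the parity of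
`k + l` gives `ϑ₀₀(τ,0) ϑ₀₀(τ,z) = ϑ₀₀(2τ,z)² + ϑ₁₀(2τ,z)²` and
`ϑ₁₀(τ,0) ϑ₁₀(τ,z) = 2 ϑ₀₀(2τ,z) ϑ₁₀(2τ,z)`. The quotient of the two is the claimed identity with
constant `2 ϑ₀₀(τ,0) / ϑ₁₀(τ,0)`, and Jacobi's triple product evaluates this constant as an eta
quotient. The triple product is the limit `n → ∞` of the `q`-binomial theorem of exponent `2n`,
with its index shifted to run over `-n, …, n`. The base there is written as `p ^ 2`, so that its
half-integral powers are powers of `p`.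
-/

open Finset.HasAntidiagonal (antidiagonal mem_antidiagonal)

section QPochhammer

/-- The finite `q`-Pochhammer symbol `(a; q)ₙ = ∏_{k < n} (1 - a qᵏ)`. -/
def qPochhammer {R : Type*} [CommRing R] (a q : R) (n : ℕ) : R :=
  ∏ k ∈ Finset.range n, (1 - a * q ^ k)

section CommRing

variable {R : Type*} [CommRing R] (a q : R)

lemma qPochhammer_zero : qPochhammer a q 0 = 1 :=
  Finset.prod_range_zero _

lemma qPochhammer_succ (n : ℕ) :
    qPochhammer a q (n + 1) = qPochhammer a q n * (1 - a * q ^ n) :=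
  Finset.prod_range_succ _ _

lemma qPochhammer_add (m n : ℕ) :
    qPochhammer a q (m + n) = qPochhammer a q m * qPochhammer (a * q ^ m) q n := by
  simp only [qPochhammer, Finset.prod_range_add, pow_add, mul_assoc]

lemma qPochhammer_self_succ (n : ℕ) :
    qPochhammer q q (n + 1) = qPochhammer q q n * (1 - q ^ (n + 1)) := by
  rw [qPochhammer_succ, pow_succ']

end CommRing

section Field

variable {K : Type*} [Field K] {q : K}

lemma qPochhammer_mul_inv_pow {a : K} (ha : a ≠ 0) (hq : q ≠ 0) (n : ℕ) :
    qPochhammer (a * q⁻¹ ^ n) q n =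
      (-(a * q⁻¹)) ^ n * q⁻¹ ^ n.choose 2 * qPochhammer (q * a⁻¹) q n := by
  have hfactor : ∀ j ∈ Finset.range n, 1 - a * q⁻¹ ^ n * q ^ (n - 1 - j) =
      -(a * q⁻¹) * q⁻¹ ^ j * (1 - q * a⁻¹ * q ^ j) := fun j hj ↦ by
    obtain ⟨d, rfl⟩ := Nat.exists_eq_add_of_lt (Finset.mem_range.mp hj)
    rw [show j + d + 1 - 1 - j = d by lia]
    simp only [inv_pow, pow_add, pow_one]
    field
  have hpow : ∏ j ∈ Finset.range n, q⁻¹ ^ j = q⁻¹ ^ n.choose 2 := by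
    rw [Finset.prod_pow_eq_pow_sum, Finset.sum_range_id, Nat.choose_two_right]
  rw [qPochhammer, ← Finset.prod_range_reflect, Finset.prod_congr rfl hfactor,
    Finset.prod_mul_distrib, Finset.prod_mul_distrib, hpow, Finset.prod_const, Finset.card_range,
    qPochhammer]

lemma qPochhammer_two_mul_mul_inv_pow {a : K} (ha : a ≠ 0) (hq : q ≠ 0) (n : ℕ) :
    qPochhammer (a * q⁻¹ ^ n) q (2 * n) =
      (-(a * q⁻¹)) ^ n * q⁻¹ ^ n.choose 2 *
        (qPochhammer a q n * qPochhammer (q * a⁻¹) q n) := by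
  rw [two_mul, qPochhammer_add, qPochhammer_mul_inv_pow ha hq, mul_assoc a, ← mul_pow,
    inv_mul_cancel₀ hq, one_pow, mul_one]
  ring

/-- The summand of index `(i, j)` in the `q`-binomial theorem of exponent `i + j`, divided by
`(q; q)ᵢ₊ⱼ`; this normalisation makes the theorem symmetric in `i` and `j`. -/
def qBinomialTerm (q w : K) (x : ℕ × ℕ) : K :=
  q ^ x.1.choose 2 * w ^ x.1 / (qPochhammer q q x.1 * qPochhammer q q x.2)

lemma one_sub_pow_succ_ne_zero (hq : ∀ n, qPochhammer q q n ≠ 0) (n : ℕ) : 1 - q ^ (n + 1) ≠ 0 :=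
  right_ne_zero_of_mul (qPochhammer_self_succ q n ▸ hq (n + 1))

lemma one_sub_pow_mul_qBinomialTerm_snd (hq : ∀ n, qPochhammer q q n ≠ 0) (w : K) (i j : ℕ) :
    (1 - q ^ (j + 1)) * qBinomialTerm q w (i, j + 1) = qBinomialTerm q w (i, j) := by
  have hi := hq i
  have hj := hq j
  have hj' := one_sub_pow_succ_ne_zero hq j
  simp only [qBinomialTerm, qPochhammer_self_succ]
  field

lemma one_sub_pow_mul_qBinomialTerm_fst (hq : ∀ n, qPochhammer q q n ≠ 0) (w : K) (i j : ℕ) :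
    (1 - q ^ (i + 1)) * qBinomialTerm q w (i + 1, j) = w * q ^ i * qBinomialTerm q w (i, j) := by
  have hi := hq i
  have hj := hq j
  have hi' := one_sub_pow_succ_ne_zero hq i
  simp only [qBinomialTerm, qPochhammer_self_succ, Nat.choose_succ_succ' i 1, Nat.choose_one_right]
  field

lemma one_sub_pow_mul_sum_qBinomialTerm (hq : ∀ n, qPochhammer q q n ≠ 0) (w : K) (N : ℕ) :
    (1 - q ^ (N + 1)) * ∑ x ∈ antidiagonal (N + 1), qBinomialTerm q w x =
      (1 + w * q ^ N) * ∑ x ∈ antidiagonal N, qBinomialTerm q w x := by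
  have hsplit : ∀ x ∈ antidiagonal (N + 1), (1 - q ^ (N + 1)) * qBinomialTerm q w x =
      (1 - q ^ x.2) * qBinomialTerm q w x + q ^ x.2 * ((1 - q ^ x.1) * qBinomialTerm q w x) :=
    fun x hx ↦ by rw [← mem_antidiagonal.mp hx, pow_add]; ring
  have hmerge : ∀ x ∈ antidiagonal N,
      q ^ x.2 * (w * q ^ x.1 * qBinomialTerm q w x) = w * q ^ N * qBinomialTerm q w x :=
    fun x hx ↦ by rw [← mem_antidiagonal.mp hx, pow_add]; ring
  rw [Finset.mul_sum, Finset.sum_congr rfl hsplit, Finset.sum_add_distrib,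
    Finset.Nat.sum_antidiagonal_succ', Finset.Nat.sum_antidiagonal_succ]
  simp only [one_sub_pow_mul_qBinomialTerm_snd hq, one_sub_pow_mul_qBinomialTerm_fst hq,
    pow_zero, sub_self, zero_mul, mul_zero, zero_add]
  rw [Finset.sum_congr rfl hmerge, ← Finset.mul_sum]
  ring

lemma sum_antidiagonal_qBinomialTerm (hq : ∀ n, qPochhammer q q n ≠ 0) (w : K) (N : ℕ) :
    ∑ x ∈ antidiagonal N, qBinomialTerm q w x =
      qPochhammer (-w) q N / qPochhammer q q N := by
  induction N with
  | zero => simp [qBinomialTerm, qPochhammer_zero]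
  | succ N ih =>
    rw [qPochhammer_self_succ, qPochhammer_succ, neg_mul, sub_neg_eq_add, mul_div_mul_comm, ← ih,
      mul_div_assoc', eq_div_iff (one_sub_pow_succ_ne_zero hq N), mul_comm,
      one_sub_pow_mul_sum_qBinomialTerm hq, mul_comm]

/-- The reciprocal `1 / (q; q)ₖ` for an integer index `k`, with the usual convention that it
vanishes for negative `k`. It lets sums over `-n ≤ m ≤ n` be written as sums over all of `ℤ`. -/
def invQFactorial (q : K) : ℤ → K
  | .ofNat n => (qPochhammer q q n)⁻¹
  | .negSucc _ => 0

lemma invQFactorial_natCast (q : K) (n : ℕ) : invQFactorial q n = (qPochhammer q q n)⁻¹ :=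
  rfl

lemma invQFactorial_of_neg (q : K) {k : ℤ} (hk : k < 0) : invQFactorial q k = 0 := by
  obtain ⟨n, rfl⟩ := Int.eq_negSucc_of_lt_zero hk
  rfl

end Field

end QPochhammer

section FiniteTripleProduct

lemma tsum_int_eq_sum_antidiagonal {M : Type*} [AddCommMonoid M] [TopologicalSpace M]
    {f : ℤ → M} {n : ℕ} (hf : ∀ m : ℤ, n < |m| → f m = 0) :
    ∑' m, f m = ∑ x ∈ antidiagonal (2 * n), f (x.1 - n) := by
  rw [tsum_eq_sum (s := Finset.Icc (-n : ℤ) n) fun m hm ↦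
    hf m (by simpa [← abs_le] using hm)]
  refine Finset.sum_nbij' (fun m ↦ ((m + n).toNat, (n - m).toNat)) (fun x ↦ x.1 - n)
    (fun m hm ↦ ?_) (fun x hx ↦ ?_) (fun m hm ↦ ?_) (fun x hx ↦ ?_) fun m hm ↦ ?_
  all_goals simp only [Finset.mem_Icc, mem_antidiagonal, Prod.ext_iff] at *
  iterate 4 lia
  congr 1
  lia

lemma sq_eq_two_mul_choose_two_add (n : ℕ) : n ^ 2 = 2 * n.choose 2 + n := by
  rw [Nat.choose_two_right, Nat.two_mul_div_two_of_even (Nat.even_mul_pred_self n)]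
  cases n <;> lia

variable {K : Type*} [Field K] {p x : K}

lemma zpow_sub_sq_mul_zpow_sub (hp : p ≠ 0) (hx : x ≠ 0) (i n : ℕ) :
    p ^ ((i - n : ℤ) ^ 2) * x ^ (i - n : ℤ) =
      (x * p * (p ^ 2)⁻¹ ^ n) ^ i * (p ^ 2) ^ i.choose 2 * (p ^ n ^ 2 * (x ^ n)⁻¹) := by
  have hsq : (i - n : ℤ) ^ 2 = i - 2 * n * i + 2 * i.choose 2 + n ^ 2 := by
    have := congrArg (Nat.cast (R := ℤ)) (sq_eq_two_mul_choose_two_add i)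
    push_cast at this
    linear_combination this
  rw [hsq, zpow_sub₀ hx, zpow_add₀ hp, zpow_add₀ hp, zpow_sub₀ hp]
  norm_cast
  simp only [mul_pow, inv_pow, ← pow_mul]
  field

lemma tsum_invQFactorial_mul_invQFactorial [TopologicalSpace K] (hp : p ≠ 0) (hx : x ≠ 0)
    (hq : ∀ n, qPochhammer (p ^ 2) (p ^ 2) n ≠ 0) (n : ℕ) :
    ∑' m : ℤ, qPochhammer (p ^ 2) (p ^ 2) (2 * n) *
        (invQFactorial (p ^ 2) (n + m) * invQFactorial (p ^ 2) (n - m)) * (p ^ m ^ 2 * x ^ m) =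
      qPochhammer (-(x * p)) (p ^ 2) n * qPochhammer (-(x⁻¹ * p)) (p ^ 2) n := by
  set w := x * p * (p ^ 2)⁻¹ ^ n with hw
  have hterm : ∀ y ∈ antidiagonal (2 * n),
      qPochhammer (p ^ 2) (p ^ 2) (2 * n) * (invQFactorial (p ^ 2) (n + (y.1 - n)) *
          invQFactorial (p ^ 2) (n - (y.1 - n))) * (p ^ ((y.1 - n : ℤ) ^ 2) * x ^ (y.1 - n : ℤ)) =
        qPochhammer (p ^ 2) (p ^ 2) (2 * n) * (p ^ n ^ 2 * (x ^ n)⁻¹) *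
          qBinomialTerm (p ^ 2) w y := by
    rintro ⟨i, j⟩ hij
    rw [mem_antidiagonal] at hij
    rw [show (n + (i - n) : ℤ) = i by ring, show (n - (i - n) : ℤ) = j by lia,
      invQFactorial_natCast, invQFactorial_natCast, zpow_sub_sq_mul_zpow_sub hp hx, qBinomialTerm]
    field
  have hprod : qPochhammer (-w) (p ^ 2) (2 * n) = x ^ n * (p ^ n ^ 2)⁻¹ *
      (qPochhammer (-(x * p)) (p ^ 2) n * qPochhammer (-(x⁻¹ * p)) (p ^ 2) n) := by
    have hinv : p ^ 2 * (-(x * p))⁻¹ = -(x⁻¹ * p) := by field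
    have hcoeff : (-(-(x * p) * (p ^ 2)⁻¹)) ^ n * (p ^ 2)⁻¹ ^ n.choose 2 =
        x ^ n * (p ^ n ^ 2)⁻¹ := by
      rw [sq_eq_two_mul_choose_two_add n, pow_add, pow_mul, neg_mul, neg_neg, mul_pow, mul_pow]
      simp only [inv_pow, ← pow_mul]
      field
    rw [hw, ← neg_mul, ← neg_mul, qPochhammer_two_mul_mul_inv_pow (by simp [hp, hx])
      (pow_ne_zero 2 hp), neg_mul, hinv, hcoeff]
  rw [tsum_int_eq_sum_antidiagonal fun m hm ↦ ?_, Finset.sum_congr rfl hterm, ← Finset.mul_sum,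
    sum_antidiagonal_qBinomialTerm hq, hprod]
  · have := hq (2 * n)
    field
  · rcases lt_abs.mp hm with hm | hm
    · rw [invQFactorial_of_neg _ (show (n - m : ℤ) < 0 by lia), mul_zero, mul_zero, zero_mul]
    · rw [invQFactorial_of_neg _ (show (n + m : ℤ) < 0 by lia), zero_mul, mul_zero, zero_mul]

end FiniteTripleProduct

section InfiniteProducts

/-- The infinite `q`-Pochhammer symbol `(a; q)_∞ = ∏_{k ≥ 0} (1 - a qᵏ)`, convergent for
`‖q‖ < 1`. -/
def qPochhammerInf {R : Type*} [CommRing R] [TopologicalSpace R] (a q : R) : R :=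
  ∏' k : ℕ, (1 - a * q ^ k)

variable {𝕜 : Type*} [NormedField 𝕜] {a q : 𝕜}

lemma one_sub_mul_pow_ne_zero (ha : ‖a‖ < 1) (hq : ‖q‖ ≤ 1) (k : ℕ) : 1 - a * q ^ k ≠ 0 := by
  refine sub_ne_zero.mpr fun h ↦ ?_
  have hlt : ‖a * q ^ k‖ < 1 := by
    rw [norm_mul, norm_pow]
    exact mul_lt_one_of_nonneg_of_lt_one_left (norm_nonneg a) ha (pow_le_one₀ (norm_nonneg q) hq)
  exact hlt.ne (h ▸ norm_one)

lemma qPochhammer_ne_zero (ha : ‖a‖ < 1) (hq : ‖q‖ ≤ 1) (n : ℕ) : qPochhammer a q n ≠ 0 :=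
  Finset.prod_ne_zero_iff.mpr fun k _ ↦ one_sub_mul_pow_ne_zero ha hq k

lemma norm_pow_two_lt_one (hq : ‖q‖ < 1) : ‖q ^ 2‖ < 1 :=
  (norm_pow q 2).trans_lt (pow_lt_one₀ (norm_nonneg q) hq two_ne_zero)

lemma summable_norm_neg_mul_pow (hq : ‖q‖ < 1) (a : 𝕜) : Summable fun k : ℕ ↦ ‖-(a * q ^ k)‖ := by
  simpa only [norm_neg, norm_mul] using
    (summable_norm_geometric_of_norm_lt_one hq).mul_left ‖a‖

variable [CompleteSpace 𝕜]

lemma multipliable_one_sub_mul_pow (hq : ‖q‖ < 1) (a : 𝕜) :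
    Multipliable fun k : ℕ ↦ 1 - a * q ^ k := by
  simpa only [sub_eq_add_neg] using
    multipliable_one_add_of_summable (summable_norm_neg_mul_pow hq a)

lemma tendsto_qPochhammer (hq : ‖q‖ < 1) (a : 𝕜) :
    Tendsto (qPochhammer a q) atTop (𝓝 (qPochhammerInf a q)) :=
  (multipliable_one_sub_mul_pow hq a).tendsto_prod_tprod_nat

lemma qPochhammerInf_ne_zero (ha : ‖a‖ < 1) (hq : ‖q‖ < 1) : qPochhammerInf a q ≠ 0 := by
  simp only [qPochhammerInf, sub_eq_add_neg]
  refine tprod_one_add_ne_zero_of_summable (fun k ↦ ?_) (summable_norm_neg_mul_pow hq a)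
  simpa only [sub_eq_add_neg] using one_sub_mul_pow_ne_zero ha hq.le k

lemma qPochhammerInf_eq_one_sub_mul (hq : ‖q‖ < 1) (a : 𝕜) :
    qPochhammerInf a q = (1 - a) * qPochhammerInf (a * q) q := by
  have hshift (k : ℕ) : 1 - a * q ^ (k + 1) = 1 - a * q * q ^ k := by rw [pow_succ']; ring
  have hmul : Multipliable fun k : ℕ ↦ 1 - a * q ^ (k + 1) := by
    simpa only [hshift] using multipliable_one_sub_mul_pow hq (a * q)
  rw [qPochhammerInf, tprod_eq_zero_mul' (f := fun k ↦ 1 - a * q ^ k) hmul, pow_zero, mul_one,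
    tprod_congr hshift, qPochhammerInf]

lemma qPochhammerInf_mul_neg (hq : ‖q‖ < 1) (a : 𝕜) :
    qPochhammerInf a q * qPochhammerInf (-a) q = qPochhammerInf (a ^ 2) (q ^ 2) := by
  rw [qPochhammerInf, qPochhammerInf, ← (multipliable_one_sub_mul_pow hq a).tprod_mul
    (multipliable_one_sub_mul_pow hq (-a))]
  exact tprod_congr fun k ↦ by ring

lemma qPochhammerInf_mul_qPochhammerInf_sq (hq : ‖q‖ < 1) (a : 𝕜) :
    qPochhammerInf a (q ^ 2) * qPochhammerInf (a * q) (q ^ 2) = qPochhammerInf a q := by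
  have heven (k : ℕ) : 1 - a * (q ^ 2) ^ k = 1 - a * q ^ (2 * k) := by rw [pow_mul]
  have hodd (k : ℕ) : 1 - a * q * (q ^ 2) ^ k = 1 - a * q ^ (2 * k + 1) := by
    rw [pow_succ' q (2 * k), pow_mul, mul_assoc]
  have hmul := multipliable_one_sub_mul_pow (norm_pow_two_lt_one hq)
  simp only [qPochhammerInf, heven, hodd]
  exact tprod_even_mul_odd (f := fun k ↦ 1 - a * q ^ k) (by simpa only [heven] using hmul a)
    (by simpa only [hodd] using hmul (a * q))

lemma tendsto_invQFactorial (hq : ‖q‖ < 1) :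
    Tendsto (invQFactorial q) atTop (𝓝 (qPochhammerInf q q)⁻¹) := by
  rw [← Nat.map_cast_int_atTop, tendsto_map'_iff]
  exact (tendsto_qPochhammer hq q).inv₀ (qPochhammerInf_ne_zero hq hq)

lemma exists_norm_invQFactorial_le (hq : ‖q‖ < 1) : ∃ B, ∀ k, ‖invQFactorial q k‖ ≤ B := by
  obtain ⟨B, hB⟩ :=
    ((tendsto_invQFactorial hq).comp tendsto_natCast_atTop_atTop).norm.bddAbove_range
  have hB' (n : ℕ) : ‖invQFactorial q n‖ ≤ B := hB ⟨n, rfl⟩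
  refine ⟨B, fun k ↦ ?_⟩
  rcases lt_or_ge k 0 with hk | hk
  · rw [invQFactorial_of_neg q hk, norm_zero]
    exact (norm_nonneg _).trans (hB' 0)
  · lift k to ℕ using hk
    exact hB' k

end InfiniteProducts

section TripleProduct

variable {𝕜 : Type*} [NormedField 𝕜] {p x : 𝕜}

lemma summable_norm_pow_sq_mul_pow (hp : p ≠ 0) (hp1 : ‖p‖ < 1) (hx : x ≠ 0) :
    Summable fun n : ℕ ↦ ‖p ^ n ^ 2 * x ^ n‖ := by
  have hratio (n : ℕ) : ‖‖p ^ (n + 1) ^ 2 * x ^ (n + 1)‖‖ / ‖‖p ^ n ^ 2 * x ^ n‖‖ =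
      ‖p * x‖ * ‖p ^ 2‖ ^ n := by
    rw [norm_norm, norm_norm, ← norm_div, ← norm_pow, ← norm_mul, add_sq, pow_add p, pow_add p,
      ← pow_mul]
    congr 1
    field
  refine summable_of_ratio_test_tendsto_lt_one zero_lt_one
    (.of_forall fun n ↦ norm_ne_zero_iff.mpr (mul_ne_zero (pow_ne_zero _ hp) (pow_ne_zero _ hx))) ?_
  simpa only [hratio, mul_zero] using
    (tendsto_pow_atTop_nhds_zero_of_lt_one (norm_nonneg _) (norm_pow_two_lt_one hp1)).const_mul
      ‖p * x‖

lemma summable_norm_zpow_sq_mul_zpow (hp : p ≠ 0) (hp1 : ‖p‖ < 1) (hx : x ≠ 0) :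
    Summable fun m : ℤ ↦ ‖p ^ m ^ 2 * x ^ m‖ := by
  refine .of_nat_of_neg ?_ ?_
  · exact_mod_cast summable_norm_pow_sq_mul_pow hp hp1 hx
  · simp only [neg_sq, zpow_neg, ← inv_zpow]
    exact_mod_cast summable_norm_pow_sq_mul_pow hp hp1 (inv_ne_zero hx)

variable [CompleteSpace 𝕜]

lemma tendsto_mul_invQFactorial_mul_invQFactorial {q : 𝕜} (hq : ‖q‖ < 1) (m : ℤ) :
    Tendsto (fun n : ℕ ↦ qPochhammer q q (2 * n) *
        (invQFactorial q (n + m) * invQFactorial q (n - m))) atTop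
      (𝓝 (qPochhammerInf q q)⁻¹) := by
  have hE := qPochhammerInf_ne_zero hq hq
  have hnat : Tendsto (fun n : ℕ ↦ 2 * n) atTop atTop := tendsto_id.const_mul_atTop' two_pos
  have hcast : Tendsto (fun n : ℕ ↦ (n : ℤ)) atTop atTop := tendsto_natCast_atTop_atTop
  have hinv := tendsto_invQFactorial hq
  have hlim := ((tendsto_qPochhammer hq q).comp hnat).mul
    ((hinv.comp (tendsto_atTop_add_const_right _ m hcast)).mul
      (hinv.comp (tendsto_atTop_add_const_right _ (-m) hcast)))
  rwa [mul_inv_cancel_left₀ hE] at hlim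

theorem jacobi_triple_product (hp : p ≠ 0) (hp1 : ‖p‖ < 1) (hx : x ≠ 0) :
    ∑' m : ℤ, p ^ m ^ 2 * x ^ m = qPochhammerInf (p ^ 2) (p ^ 2) *
      (qPochhammerInf (-(x * p)) (p ^ 2) * qPochhammerInf (-(x⁻¹ * p)) (p ^ 2)) := by
  have hq := norm_pow_two_lt_one hp1
  have hprod := (tendsto_qPochhammer hq (-(x * p))).mul (tendsto_qPochhammer hq (-(x⁻¹ * p)))
  simp only [← tsum_invQFactorial_mul_invQFactorial hp hx (qPochhammer_ne_zero hq hq.le)] at hprod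
  obtain ⟨A, hA⟩ := (tendsto_qPochhammer hq (p ^ 2)).norm.bddAbove_range
  obtain ⟨B, hB⟩ := exists_norm_invQFactorial_le hq
  have hA' (n : ℕ) : ‖qPochhammer (p ^ 2) (p ^ 2) n‖ ≤ A := hA ⟨n, rfl⟩
  have hsum := tendsto_tsum_of_dominated_convergence
    ((summable_norm_zpow_sq_mul_zpow hp hp1 hx).mul_left (A * (B * B)))
    (fun m ↦ (tendsto_mul_invQFactorial_mul_invQFactorial hq m).mul_const (p ^ m ^ 2 * x ^ m))
    (.of_forall fun n m ↦ by
      have hA0 := (norm_nonneg _).trans (hA' 0)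
      have hB0 := (norm_nonneg _).trans (hB 0)
      rw [norm_mul, norm_mul, norm_mul]
      gcongr
      exacts [hA' _, hB _, hB _])
  rw [← tendsto_nhds_unique hsum hprod, tsum_mul_left,
    mul_inv_cancel_left₀ (qPochhammerInf_ne_zero hq hq)]

lemma qPochhammerInf_neg_mul_mul (hp1 : ‖p‖ < 1) :
    qPochhammerInf (-p) (p ^ 2) * (qPochhammerInf p p * qPochhammerInf (p ^ 4) (p ^ 4)) =
      qPochhammerInf (p ^ 2) (p ^ 2) ^ 2 := by
  have hE₁ := qPochhammerInf_mul_neg hp1 p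
  have hE₂ := qPochhammerInf_mul_neg (norm_pow_two_lt_one hp1) (p ^ 2)
  have hsplit := qPochhammerInf_mul_qPochhammerInf_sq hp1 (-p)
  rw [← pow_mul] at hE₂
  rw [neg_mul, ← sq] at hsplit
  rw [← hE₂]
  linear_combination qPochhammerInf p p * qPochhammerInf (p ^ 2) (p ^ 2) * hsplit +
    qPochhammerInf (p ^ 2) (p ^ 2) * hE₁

theorem tsum_zpow_sq_mul (hp : p ≠ 0) (hp1 : ‖p‖ < 1) :
    (∑' m : ℤ, p ^ m ^ 2) * (qPochhammerInf p p * qPochhammerInf (p ^ 4) (p ^ 4)) ^ 2 =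
      qPochhammerInf (p ^ 2) (p ^ 2) ^ 5 := by
  have htriple := jacobi_triple_product hp hp1 one_ne_zero
  simp only [one_zpow, mul_one, inv_one, one_mul] at htriple
  rw [htriple, mul_assoc, ← sq, ← mul_pow, qPochhammerInf_neg_mul_mul hp1]
  ring

theorem tsum_zpow_sq_mul_zpow_self_mul (hp : p ≠ 0) (hp1 : ‖p‖ < 1) :
    (∑' m : ℤ, p ^ m ^ 2 * p ^ m) * qPochhammerInf (p ^ 2) (p ^ 2) =
      2 * qPochhammerInf (p ^ 4) (p ^ 4) ^ 2 := by
  have hq := norm_pow_two_lt_one hp1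
  have hE := qPochhammerInf_mul_neg hq (p ^ 2)
  rw [← pow_mul] at hE
  rw [jacobi_triple_product hp hp1 hp, inv_mul_cancel₀ hp, ← sq,
    qPochhammerInf_eq_one_sub_mul hq (-1), neg_one_mul, ← hE]
  ring

end TripleProduct

section ParitySplitting

lemma bijective_sumElim_sub_add : Function.Bijective
    (Sum.elim (fun x ↦ (x.1 - x.2, x.1 + x.2)) fun x ↦ (x.1 - x.2, x.1 + x.2 + 1) :
      (ℤ × ℤ) ⊕ (ℤ × ℤ) → ℤ × ℤ) := by
  constructor
  · rintro (⟨a, b⟩ | ⟨a, b⟩) (⟨c, d⟩ | ⟨c, d⟩) h <;>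
      simp only [Sum.elim_inl, Sum.elim_inr, Prod.mk.injEq, Sum.inl.injEq, Sum.inr.injEq,
        reduceCtorEq] at h ⊢ <;> lia
  · rintro ⟨k, l⟩
    obtain ⟨m, hm | hm⟩ := Int.even_or_odd' (k + l)
    · exact ⟨.inl (m, l - m), by simp only [Sum.elim_inl, Prod.mk.injEq]; lia⟩
    · exact ⟨.inr (m, l - m - 1), by simp only [Sum.elim_inr, Prod.mk.injEq]; lia⟩

lemma tsum_mul_tsum_eq_tsum_sub_add {R : Type*} [NormedRing R] [CompleteSpace R] {f g : ℤ → R}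
    (hf : Summable (‖f ·‖)) (hg : Summable (‖g ·‖)) :
    (∑' n, f n) * ∑' n, g n = ∑' x : ℤ × ℤ, f (x.1 - x.2) * g (x.1 + x.2) +
      ∑' x : ℤ × ℤ, f (x.1 - x.2) * g (x.1 + x.2 + 1) := by
  let e := Equiv.ofBijective _ bijective_sumElim_sub_add
  have hfg := e.summable_iff.mpr (summable_mul_of_summable_norm hf hg)
  rw [tsum_mul_tsum_of_summable_norm hf hg, ← e.tsum_eq]
  exact Summable.tsum_sum (hfg.comp_injective Sum.inl_injective)
    (hfg.comp_injective Sum.inr_injective)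

end ParitySplitting

section Theta

/-- The nome `e^{πiτ}`, whose square is `q`. -/
def nome (τ : ℂ) : ℂ :=
  Complex.exp (π * I * τ)

/-- The `n`-th term of `thetaChar a τ z`. -/
def thetaCharTerm (a τ z : ℂ) (n : ℤ) : ℂ :=
  Complex.exp (2 * π * I * ((n + a) * z + τ * ((n + a) ^ 2 / 2)))

/-- The theta function `∑ₙ e^{2πi(n+a)z} q^{(n+a)²/2}` with characteristic `a`, which interpolates
between `theta00` (`a = 0`) and `theta10` (`a = 1/2`). -/
def thetaChar (a τ z : ℂ) : ℂ :=
  ∑' n : ℤ, thetaCharTerm a τ z n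

lemma nome_ne_zero (τ : ℂ) : nome τ ≠ 0 :=
  Complex.exp_ne_zero _

lemma norm_nome_lt_one {τ : ℂ} (hτ : 0 < τ.im) : ‖nome τ‖ < 1 := by
  rw [nome, Complex.norm_exp, Real.exp_lt_one_iff]
  simpa using mul_pos Real.pi_pos hτ

lemma theta00_eq_thetaChar (τ z : ℂ) : theta00 τ z = thetaChar 0 τ z :=
  tsum_congr fun n ↦ by rw [thetaCharTerm, ← Complex.exp_add]; ring_nf

lemma theta10_eq_thetaChar (τ z : ℂ) : theta10 τ z = thetaChar (1 / 2) τ z :=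
  tsum_congr fun n ↦ by rw [thetaCharTerm, ← Complex.exp_add]; ring_nf

lemma thetaChar_add_one (a τ z : ℂ) : thetaChar (a + 1) τ z = thetaChar a τ z := by
  rw [thetaChar, thetaChar, ← (Equiv.addRight (1 : ℤ)).tsum_eq (thetaCharTerm a τ z)]
  refine tsum_congr fun n ↦ ?_
  simp only [thetaCharTerm, Equiv.coe_addRight]
  push_cast
  ring_nf

lemma thetaCharTerm_eq_mul (a τ z : ℂ) (n : ℤ) :
    thetaCharTerm a τ z n = Complex.exp (2 * π * I * (a * z + τ * (a ^ 2 / 2))) *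
      (nome τ ^ n ^ 2 * Complex.exp (2 * π * I * (z + a * τ)) ^ n) := by
  simp only [thetaCharTerm, nome, ← Complex.exp_int_mul, ← Complex.exp_add]
  push_cast
  ring_nf

lemma summable_norm_thetaCharTerm {τ : ℂ} (hτ : 0 < τ.im) (a z : ℂ) :
    Summable fun n ↦ ‖thetaCharTerm a τ z n‖ := by
  simp only [thetaCharTerm_eq_mul, norm_mul (Complex.exp _)]
  exact (summable_norm_zpow_sq_mul_zpow (nome_ne_zero τ) (norm_nome_lt_one hτ)
    (Complex.exp_ne_zero _)).mul_left _

theorem thetaChar_mul_thetaChar {τ : ℂ} (hτ : 0 < τ.im) (a b w z : ℂ) :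
    thetaChar a τ w * thetaChar b τ z =
      thetaChar ((a + b) / 2) (2 * τ) (z + w) * thetaChar ((b - a) / 2) (2 * τ) (z - w) +
        thetaChar ((a + b + 1) / 2) (2 * τ) (z + w) *
          thetaChar ((b - a + 1) / 2) (2 * τ) (z - w) := by
  have h2τ : 0 < (2 * τ).im := by simpa using hτ
  simp only [thetaChar]
  rw [tsum_mul_tsum_eq_tsum_sub_add (summable_norm_thetaCharTerm hτ a w)
      (summable_norm_thetaCharTerm hτ b z),
    tsum_mul_tsum_of_summable_norm (summable_norm_thetaCharTerm h2τ _ _)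
      (summable_norm_thetaCharTerm h2τ _ _),
    tsum_mul_tsum_of_summable_norm (summable_norm_thetaCharTerm h2τ _ _)
      (summable_norm_thetaCharTerm h2τ _ _)]
  congr 1
  all_goals
    refine tsum_congr fun x ↦ ?_
    simp only [thetaCharTerm, ← Complex.exp_add]
    push_cast
    ring_nf

lemma theta00_zero_mul_theta00 {τ : ℂ} (hτ : 0 < τ.im) (z : ℂ) :
    theta00 τ 0 * theta00 τ z = theta00 (2 * τ) z ^ 2 + theta10 (2 * τ) z ^ 2 := by
  have h := thetaChar_mul_thetaChar hτ 0 0 0 z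
  simp only [add_zero, sub_zero, zero_add, zero_div] at h
  simp only [theta00_eq_thetaChar, theta10_eq_thetaChar, h, sq]

lemma theta10_zero_mul_theta10 {τ : ℂ} (hτ : 0 < τ.im) (z : ℂ) :
    theta10 τ 0 * theta10 τ z = 2 * (theta00 (2 * τ) z * theta10 (2 * τ) z) := by
  have h := thetaChar_mul_thetaChar hτ (1 / 2) (1 / 2) 0 z
  have hone : ((1 / 2 + 1 / 2 + 1) / 2 : ℂ) = 0 + 1 := by norm_num
  rw [hone, thetaChar_add_one] at h
  simp only [add_zero, sub_zero, sub_self, zero_div, add_halves, zero_add] at h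
  simp only [theta00_eq_thetaChar, theta10_eq_thetaChar, h]
  ring

lemma theta00_zero_eq_tsum (τ : ℂ) : theta00 τ 0 = ∑' m : ℤ, nome τ ^ m ^ 2 := by
  rw [theta00_eq_thetaChar, thetaChar]
  simp only [thetaCharTerm_eq_mul]
  simp

lemma theta10_zero_eq_tsum (τ : ℂ) :
    theta10 τ 0 = Complex.exp (π * I * τ / 4) * ∑' m : ℤ, nome τ ^ m ^ 2 * nome τ ^ m := by
  have hcoeff : 2 * π * I * (1 / 2 * 0 + τ * ((1 / 2) ^ 2 / 2)) = π * I * τ / 4 := by ring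
  have hnome : Complex.exp (2 * π * I * (0 + 1 / 2 * τ)) = nome τ := by rw [nome]; ring_nf
  rw [theta10_eq_thetaChar, thetaChar]
  simp only [thetaCharTerm_eq_mul, hcoeff, hnome, tsum_mul_left]

end Theta

section DedekindEta

lemma dedekindEta_eq (τ : ℂ) :
    dedekindEta τ =
      Complex.exp (π * I * τ / 12) * qPochhammerInf (nome (2 * τ)) (nome (2 * τ)) := by
  rw [dedekindEta, qPochhammerInf]
  congr 1
  refine tprod_congr fun n ↦ ?_
  rw [← pow_succ', nome, ← Complex.exp_nat_mul]
  push_cast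
  ring_nf

lemma dedekindEta_ne_zero {τ : ℂ} (hτ : 0 < τ.im) : dedekindEta τ ≠ 0 := by
  have hq := norm_nome_lt_one (show 0 < (2 * τ).im by simpa using hτ)
  rw [dedekindEta_eq]
  exact mul_ne_zero (Complex.exp_ne_zero _) (qPochhammerInf_ne_zero hq hq)

lemma dedekindEta_natCast_mul_half (n : ℕ) (τ : ℂ) :
    dedekindEta (n * (τ / 2)) =
      Complex.exp (π * I * τ / 24) ^ n * qPochhammerInf (nome τ ^ n) (nome τ ^ n) := by
  have hnome : nome (2 * (n * (τ / 2))) = nome τ ^ n := by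
    rw [nome, nome, ← Complex.exp_nat_mul]
    ring_nf
  rw [dedekindEta_eq, hnome, ← Complex.exp_nat_mul]
  ring_nf

lemma dedekindEta_div_two (τ : ℂ) :
    dedekindEta (τ / 2) = Complex.exp (π * I * τ / 24) * qPochhammerInf (nome τ) (nome τ) := by
  simpa using dedekindEta_natCast_mul_half 1 τ

lemma dedekindEta_eq_nome_sq (τ : ℂ) :
    dedekindEta τ =
      Complex.exp (π * I * τ / 24) ^ 2 * qPochhammerInf (nome τ ^ 2) (nome τ ^ 2) := by
  simpa [mul_div_cancel₀] using dedekindEta_natCast_mul_half 2 τ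

lemma dedekindEta_two_mul (τ : ℂ) :
    dedekindEta (2 * τ) =
      Complex.exp (π * I * τ / 24) ^ 4 * qPochhammerInf (nome τ ^ 4) (nome τ ^ 4) := by
  rw [← dedekindEta_natCast_mul_half]
  congr 1
  push_cast
  ring

theorem theta00_zero_mul_dedekindEta {τ : ℂ} (hτ : 0 < τ.im) :
    theta00 τ 0 * (dedekindEta (τ / 2) * dedekindEta (2 * τ)) ^ 2 = dedekindEta τ ^ 5 := by
  rw [theta00_zero_eq_tsum, dedekindEta_div_two, dedekindEta_two_mul, dedekindEta_eq_nome_sq]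
  linear_combination Complex.exp (π * I * τ / 24) ^ 10 *
    tsum_zpow_sq_mul (nome_ne_zero τ) (norm_nome_lt_one hτ)

theorem theta10_zero_mul_dedekindEta {τ : ℂ} (hτ : 0 < τ.im) :
    theta10 τ 0 * dedekindEta τ = 2 * dedekindEta (2 * τ) ^ 2 := by
  have hexp : Complex.exp (π * I * τ / 4) = Complex.exp (π * I * τ / 24) ^ 6 := by
    rw [← Complex.exp_nat_mul]
    ring_nf
  rw [theta10_zero_eq_tsum, dedekindEta_two_mul, dedekindEta_eq_nome_sq, hexp]
  linear_combination Complex.exp (π * I * τ / 24) ^ 8 *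
    tsum_zpow_sq_mul_zpow_self_mul (nome_ne_zero τ) (norm_nome_lt_one hτ)

theorem dedekindEta_quotient_eq {τ : ℂ} (hτ : 0 < τ.im) :
    dedekindEta τ ^ 6 / (dedekindEta (τ / 2) ^ 2 * dedekindEta (2 * τ) ^ 4) =
      2 * theta00 τ 0 / theta10 τ 0 := by
  have h₁ : dedekindEta (τ / 2) ≠ 0 := dedekindEta_ne_zero (by simpa using hτ)
  have h₂ : dedekindEta τ ≠ 0 := dedekindEta_ne_zero hτ
  have h₃ : dedekindEta (2 * τ) ≠ 0 := dedekindEta_ne_zero (by simpa using hτ)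
  rw [eq_div_of_mul_eq (pow_ne_zero 2 (mul_ne_zero h₁ h₃)) (theta00_zero_mul_dedekindEta hτ),
    eq_div_of_mul_eq h₂ (theta10_zero_mul_dedekindEta hτ)]
  field

end DedekindEta

theorem stmt14 (τ z : ℂ) (hτ : 0 < τ.im)
    (h1 : theta10 (2*τ) z ≠ 0) (h2 : theta00 (2*τ) z ≠ 0) (h3 : theta10 τ z ≠ 0) :
    theta00 (2*τ) z / theta10 (2*τ) z + theta10 (2*τ) z / theta00 (2*τ) z =
      ((dedekindEta τ)^6 / ((dedekindEta (τ/2))^2 * (dedekindEta (2*τ))^4)) * (theta00 τ z / theta10 τ z) := by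
  have hsum := theta00_zero_mul_theta00 hτ z
  have hprod := theta10_zero_mul_theta10 hτ z
  calc theta00 (2 * τ) z / theta10 (2 * τ) z + theta10 (2 * τ) z / theta00 (2 * τ) z
    _ = 2 * (theta00 (2 * τ) z ^ 2 + theta10 (2 * τ) z ^ 2) /
          (2 * (theta00 (2 * τ) z * theta10 (2 * τ) z)) := by field
    _ = 2 * (theta00 τ 0 * theta00 τ z) / (theta10 τ 0 * theta10 τ z) := by rw [hsum, hprod]
    _ = 2 * theta00 τ 0 / theta10 τ 0 * (theta00 τ z / theta10 τ z) := by
      rw [← mul_assoc, mul_div_mul_comm]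
    _ = _ := by rw [dedekindEta_quotient_eq hτ]

end
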